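/- Let G be a graph on n vertices with adjacency matrix A and let k be a real scalar. If x̄ ∈ ℝ^n is a nonzero second-order point of the quartic form p_{A,k}(x) := (x²)^T (kA + kI - J) (x²), then the induced subgraph G_{x̄} of G on the vertices corresponding to the nonzero entries of x̄ satisfies α(G_{x̄}) = k. -/

import Mathlib

/-!
For a symmetric matrix `M`, the gradient of `p_M` at `x` is `4 x ∘ M x²`, and the Hessian
evaluated at `v` is `4 ⟨v², M x²⟩ + 8 ⟨x ∘ v, M (x ∘ v)⟩`. At a second-order point `M x²` therefore
vanishes on the support of `x`, and testing the Hessian on `v = u / x` shows that `M` is positive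
semidefinite on vectors `u` supported there.

Let `M = k (I + A) - J`. The quadratic form of `M` at the indicator of a stable set `T` is
`|T| (k - |T|)`, so a nonempty stable set `T` in the support has `|T| ≤ k`. If such a `T` is
maximal, its closed neighbourhoods cover the support. Each of them carries a `1 / k` fraction of the
total weight `∑ x_i²`, so at least `k` are needed and `k ≤ |T|`. Thus all maximal stable sets of the
support, in particular the maximum ones, have size `k`.
-/

open Matrix
open scoped RealInnerProductSpace

/-- The stability (independence) number of a graph: the size of the largest set of
pairwise non-adjacent vertices. -/
noncomputable def stabilityNumber {V : Type*} (G : SimpleGraph V) : ℕ :=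
  sSup {k | ∃ s : Finset V, s.card = k ∧ ∀ i ∈ s, ∀ j ∈ s, i ≠ j → ¬ G.Adj i j}

/-- The matrix `M_{A,k} = k A + k I - J`, where `J` is the all-ones matrix. -/
noncomputable def MAk {n : ℕ} (A : Matrix (Fin n) (Fin n) ℝ) (k : ℝ) : Matrix (Fin n) (Fin n) ℝ :=
  k • A + k • (1 : Matrix (Fin n) (Fin n) ℝ) - Matrix.of (fun _ _ => (1 : ℝ))

/-- Entrywise square of a vector. -/
def vsq {n : ℕ} (x : Fin n → ℝ) : Fin n → ℝ := fun i => (x i) ^ 2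

/-- A symmetric matrix `M` is copositive if `xᵀ M x ≥ 0` for all entrywise nonnegative `x`. -/
def Copositive {n : ℕ} (M : Matrix (Fin n) (Fin n) ℝ) : Prop :=
  ∀ x : Fin n → ℝ, (∀ i, 0 ≤ x i) → 0 ≤ x ⬝ᵥ M.mulVec x

/-- The quartic form `p_M(x) = (x²)ᵀ M (x²)`. -/
noncomputable def quarticForm {n : ℕ} (M : Matrix (Fin n) (Fin n) ℝ) :
    EuclideanSpace ℝ (Fin n) → ℝ :=
  fun x => vsq x ⬝ᵥ M.mulVec (vsq x)

/-- The quadratic form `q_M(x) = xᵀ M x`. -/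
noncomputable def quadForm {n : ℕ} (M : Matrix (Fin n) (Fin n) ℝ) :
    EuclideanSpace ℝ (Fin n) → ℝ :=
  fun x => x ⬝ᵥ M.mulVec x

/-- `xm` is a local minimizer of `f` over `Ω`: `xm ∈ Ω` and there is `ε > 0` such that
`f xm ≤ f x` for all `x ∈ Ω` with `‖x - xm‖ ≤ ε` (Euclidean norm). -/
def IsLocalMinimizer {n : ℕ} (f : EuclideanSpace ℝ (Fin n) → ℝ)
    (Ω : Set (EuclideanSpace ℝ (Fin n))) (xm : EuclideanSpace ℝ (Fin n)) : Prop :=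
  xm ∈ Ω ∧ ∃ ε > 0, ∀ x ∈ Ω, ‖x - xm‖ ≤ ε → f xm ≤ f x

/-- `xm` is a strict local minimizer of `f` over `Ω`: `xm ∈ Ω` and there is `ε > 0` such that
`f xm < f x` for all `x ∈ Ω` with `x ≠ xm` and `‖x - xm‖ ≤ ε` (Euclidean norm). -/
def IsStrictLocalMinimizer {n : ℕ} (f : EuclideanSpace ℝ (Fin n) → ℝ)
    (Ω : Set (EuclideanSpace ℝ (Fin n))) (xm : EuclideanSpace ℝ (Fin n)) : Prop :=
  xm ∈ Ω ∧ ∃ ε > 0, ∀ x ∈ Ω, x ≠ xm → ‖x - xm‖ ≤ ε → f xm < f x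

theorem hasFDerivAt_dotProduct {𝕜 E ι : Type*} [NontriviallyNormedField 𝕜] [NormedAddCommGroup E]
    [NormedSpace 𝕜 E] [Fintype ι] {f g : E → ι → 𝕜} {f' g' : E →L[𝕜] ι → 𝕜} {x : E}
    (hf : HasFDerivAt f f' x) (hg : HasFDerivAt g g' x) :
    HasFDerivAt (fun y => f y ⬝ᵥ g y)
      (∑ i, (f x i • (ContinuousLinearMap.proj i ∘L g') +
        g x i • (ContinuousLinearMap.proj i ∘L f'))) x :=
  HasFDerivAt.fun_sum fun i _ => (hasFDerivAt_pi'.1 hf i).mul (hasFDerivAt_pi'.1 hg i)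

theorem dotProduct_mulVec_comm_of_isSymm {ι R : Type*} [Fintype ι] [CommSemiring R]
    {M : Matrix ι ι R} (hM : M.IsSymm) (u v : ι → R) : u ⬝ᵥ M *ᵥ v = v ⬝ᵥ M *ᵥ u := by
  rw [dotProduct_mulVec, ← mulVec_transpose, hM, dotProduct_comm]

section QuarticForm

variable {n : ℕ} {M : Matrix (Fin n) (Fin n) ℝ}

/-- The Fréchet derivative at `x` of the entrywise square `y ↦ vsq y`, from which the gradient and
the Hessian of `quarticForm` are computed. Its values, like those of `vsq`, are plain functions, so
that products with them are entrywise. -/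
noncomputable def vsqDeriv (x : EuclideanSpace ℝ (Fin n)) :
    EuclideanSpace ℝ (Fin n) →L[ℝ] (Fin n → ℝ) :=
  (2 * ⇑x) • (PiLp.continuousLinearEquiv 2 ℝ fun _ : Fin n => ℝ).toContinuousLinearMap

theorem vsqDeriv_apply (x v : EuclideanSpace ℝ (Fin n)) : vsqDeriv x v = (2 : ℝ) • (⇑x * ⇑v) := by
  simp only [vsqDeriv, _root_.smul_apply, ContinuousLinearEquiv.coe_coe, smul_eq_mul, mul_assoc]
  rfl

theorem hasFDerivAt_vsq (x : EuclideanSpace ℝ (Fin n)) :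
    HasFDerivAt (fun y : EuclideanSpace ℝ (Fin n) => vsq y) (vsqDeriv x) x := by
  have h := (PiLp.hasFDerivAt_ofLp (𝕜 := ℝ) (E := fun _ : Fin n => ℝ) 2 x).pow 2
  rw [Nat.add_one_sub_one, pow_one, nsmul_eq_mul, Nat.cast_ofNat] at h
  exact h

theorem hasFDerivAt_mulVec_vsq (M : Matrix (Fin n) (Fin n) ℝ) (x : EuclideanSpace ℝ (Fin n)) :
    HasFDerivAt (fun y : EuclideanSpace ℝ (Fin n) => M *ᵥ vsq y)
      (M.mulVecLin.toContinuousLinearMap ∘L vsqDeriv x) x :=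
  M.mulVecLin.toContinuousLinearMap.hasFDerivAt.comp x (hasFDerivAt_vsq x)

theorem hasGradientAt_quarticForm (hM : M.IsSymm) (x : EuclideanSpace ℝ (Fin n)) :
    HasGradientAt (quarticForm M) (WithLp.toLp 2 (4 • (⇑x * M *ᵥ vsq x))) x := by
  rw [hasGradientAt_iff_hasFDerivAt]
  refine (hasFDerivAt_dotProduct (hasFDerivAt_vsq x) (hasFDerivAt_mulVec_vsq M x)).congr_fderiv ?_
  ext1 v
  calc _ = vsq x ⬝ᵥ M *ᵥ vsqDeriv x v + M *ᵥ vsq x ⬝ᵥ vsqDeriv x v := by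
        simp [dotProduct, Finset.sum_add_distrib]
    _ = 4 * ((⇑x * ⇑v) ⬝ᵥ M *ᵥ vsq x) := by
        rw [dotProduct_mulVec_comm_of_isSymm hM, dotProduct_comm (M *ᵥ vsq x), vsqDeriv_apply,
          smul_dotProduct, smul_eq_mul]
        ring
    _ = _ := by
        simp only [InnerProductSpace.toDual_apply_apply, PiLp.inner_apply, dotProduct,
          Finset.mul_sum]
        refine Finset.sum_congr rfl fun i _ => ?_
        simp only [Pi.mul_apply, Pi.smul_apply, nsmul_eq_mul, Nat.cast_ofNat,
          RCLike.inner_apply, Real.ringHom_apply]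
        ring

theorem fderiv_gradient_quarticForm (hM : M.IsSymm) (x v : EuclideanSpace ℝ (Fin n)) :
    fderiv ℝ (gradient (quarticForm M)) x v =
      WithLp.toLp 2 (4 • (⇑v * M *ᵥ vsq x) + 8 • (⇑x * M *ᵥ (⇑x * ⇑v))) := by
  have hcoords := HasFDerivAt.const_smul ((PiLp.hasFDerivAt_ofLp (𝕜 := ℝ) 2 x).mul
    (hasFDerivAt_mulVec_vsq M x)) 4
  have h := (PiLp.hasFDerivAt_toLp (𝕜 := ℝ) 2 _).comp x hcoords
  have hfderiv : fderiv ℝ (fun y : EuclideanSpace ℝ (Fin n) =>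
      WithLp.toLp 2 (4 • (⇑y * M *ᵥ vsq y))) x = _ := h.fderiv
  rw [gradient_eq (hasGradientAt_quarticForm hM), hfderiv]
  ext i
  calc _ = 4 • (x i * (M *ᵥ vsqDeriv x v) i + (M *ᵥ vsq x) i * v i) := by simp
    _ = 4 • (v i * (M *ᵥ vsq x) i) + 8 • (x i * (M *ᵥ (⇑x * ⇑v)) i) := by
        rw [vsqDeriv_apply, mulVec_smul, Pi.smul_apply, smul_eq_mul]
        ring

theorem inner_fderiv_gradient_quarticForm (hM : M.IsSymm) (x v : EuclideanSpace ℝ (Fin n)) :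
    ⟪fderiv ℝ (gradient (quarticForm M)) x v, v⟫ =
      4 * (vsq v ⬝ᵥ M *ᵥ vsq x) + 8 * ((⇑x * ⇑v) ⬝ᵥ M *ᵥ (⇑x * ⇑v)) := by
  rw [fderiv_gradient_quarticForm hM]
  simp only [PiLp.inner_apply, dotProduct, Finset.mul_sum, ← Finset.sum_add_distrib]
  refine Finset.sum_congr rfl fun i _ => ?_
  simp only [vsq, nsmul_eq_mul, Nat.cast_ofNat, Pi.add_apply, Pi.mul_apply, Pi.ofNat_apply,
    RCLike.inner_apply, Real.ringHom_apply]
  ring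

theorem mulVec_vsq_apply_of_gradient_eq_zero (hM : M.IsSymm) {x : EuclideanSpace ℝ (Fin n)}
    (hx : gradient (quarticForm M) x = 0) {i : Fin n} (hi : x i ≠ 0) : (M *ᵥ vsq x) i = 0 := by
  rw [(hasGradientAt_quarticForm hM x).gradient] at hx
  simpa [hi] using congrArg (fun y : EuclideanSpace ℝ (Fin n) => y i) hx

end QuarticForm

/-- A second-order point of `f`: a critical point at which the Hessian, encoded as the derivative of
the gradient, is positive semidefinite. -/
structure IsSecondOrderPoint {E : Type*} [NormedAddCommGroup E] [InnerProductSpace ℝ E]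
    [CompleteSpace E] (f : E → ℝ) (x : E) : Prop where
  gradient_eq_zero : gradient f x = 0
  hessian_nonneg : ∀ v, 0 ≤ ⟪fderiv ℝ (gradient f) x v, v⟫

namespace IsSecondOrderPoint

variable {n : ℕ} {M : Matrix (Fin n) (Fin n) ℝ} {x : EuclideanSpace ℝ (Fin n)}

theorem dotProduct_mulVec_nonneg (h : IsSecondOrderPoint (quarticForm M) x) (hM : M.IsSymm)
    {u : Fin n → ℝ} (hu : ∀ i, x i = 0 → u i = 0) : 0 ≤ u ⬝ᵥ M *ᵥ u := by
  -- Test the Hessian on `u / x`, where `0 / 0 = 0` puts a zero wherever `x` vanishes.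
  have hmul : ⇑x * (u / ⇑x) = u := by
    ext i
    exact mul_div_cancel_of_imp' (hu i)
  have hcross : vsq (u / ⇑x) ⬝ᵥ M *ᵥ vsq x = 0 := by
    refine Finset.sum_eq_zero fun i _ => ?_
    by_cases hi : x i = 0
    · simp [vsq, hi]
    · rw [mulVec_vsq_apply_of_gradient_eq_zero hM h.gradient_eq_zero hi, mul_zero]
  have hhess := h.hessian_nonneg (WithLp.toLp 2 (u / ⇑x))
  rw [inner_fderiv_gradient_quarticForm hM, hcross, hmul] at hhess
  linarith

end IsSecondOrderPoint

theorem stabilityNumber_eq_indepNum {V : Type*} (G : SimpleGraph V) :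
    stabilityNumber G = G.indepNum := by
  simp only [stabilityNumber, SimpleGraph.indepNum, SimpleGraph.isNIndepSet_iff, and_comm]
  rfl

theorem exists_adj_of_maximal_isIndepSet {V : Type*} {G : SimpleGraph V} {s : Set V}
    (hs : Maximal G.IsIndepSet s) (v : V) : ∃ u ∈ s, u = v ∨ G.Adj u v := by
  by_contra! h
  have hv : v ∉ s := fun hv => (h v hv).1 rfl
  have hins : G.IsIndepSet (insert v s) :=
    hs.prop.insert fun u hu _ => ⟨fun e => (h u hu).2 e.symm, (h u hu).2⟩
  exact hv (hs.le_of_ge hins (Set.subset_insert v s) (Set.mem_insert v s))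

section ClosedNeighborhood

variable {V R : Type*} [DecidableEq V] {G : SimpleGraph V} [DecidableRel G.Adj]

theorem one_add_adjMatrix_apply [AddMonoidWithOne R] (i j : V) :
    (1 + G.adjMatrix R) i j = if i = j ∨ G.Adj i j then 1 else 0 := by
  by_cases h : i = j
  · simp [h]
  · simp [h]

variable [Fintype V]

theorem one_add_adjMatrix_mulVec_indicator [Semiring R] {T : Set V} (hT : G.IsIndepSet T)
    {i : V} (hi : i ∈ T) : ((1 + G.adjMatrix R) *ᵥ T.indicator 1) i = 1 := by
  have hN : ∀ j ∈ G.neighborFinset i, T.indicator (1 : V → R) j = 0 := fun j hj =>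
    have hadj := (G.mem_neighborFinset i j).1 hj
    Set.indicator_of_notMem (fun hjT => hT hi hjT hadj.ne hadj) 1
  rw [add_mulVec, one_mulVec, Pi.add_apply, SimpleGraph.adjMatrix_mulVec_apply,
    Finset.sum_eq_zero hN, add_zero, Set.indicator_of_mem hi, Pi.one_apply]

variable [Semiring R] [LinearOrder R] [IsStrictOrderedRing R]

theorem sum_le_sum_one_add_adjMatrix_mulVec {w : V → R} (hw : 0 ≤ w) {T : Finset V}
    (hT : ∀ j, w j ≠ 0 → ∃ i ∈ T, i = j ∨ G.Adj i j) :
    ∑ j, w j ≤ ∑ i ∈ T, ((1 + G.adjMatrix R) *ᵥ w) i := by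
  have hentry (i j : V) : 0 ≤ (1 + G.adjMatrix R) i j * w j :=
    mul_nonneg (by rw [one_add_adjMatrix_apply]; split_ifs <;> simp) (hw j)
  simp only [mulVec, dotProduct]
  rw [Finset.sum_comm]
  refine Finset.sum_le_sum fun j _ => ?_
  by_cases hj : w j = 0
  · simp [hj]
  obtain ⟨i, hi, hij⟩ := hT j hj
  calc w j = (1 + G.adjMatrix R) i j * w j := by rw [one_add_adjMatrix_apply, if_pos hij, one_mul]
    _ ≤ _ := Finset.single_le_sum (f := fun i => (1 + G.adjMatrix R) i j * w j)
        (fun i _ => hentry i j) hi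

theorem le_card_of_dominating_of_mul_mulVec_eq_sum {w : V → R} (hw : 0 < w) {k : R} {T : Finset V}
    (hT : ∀ j, w j ≠ 0 → ∃ i ∈ T, i = j ∨ G.Adj i j)
    (hk : ∀ i ∈ T, k * ((1 + G.adjMatrix R) *ᵥ w) i = ∑ j, w j) : k ≤ T.card := by
  rcases le_total k 0 with hk0 | hk0
  · exact hk0.trans T.card.cast_nonneg
  refine le_of_mul_le_mul_right ?_ (Fintype.sum_pos hw)
  calc k * ∑ j, w j ≤ k * ∑ i ∈ T, ((1 + G.adjMatrix R) *ᵥ w) i :=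
        mul_le_mul_of_nonneg_left (sum_le_sum_one_add_adjMatrix_mulVec hw.le hT) hk0
    _ = T.card * ∑ j, w j := by rw [Finset.mul_sum, Finset.sum_congr rfl hk]; simp

end ClosedNeighborhood

section MAk

variable {n : ℕ}

theorem MAk_mulVec (A : Matrix (Fin n) (Fin n) ℝ) (k : ℝ) (w : Fin n → ℝ) :
    MAk A k *ᵥ w = k • ((1 + A) *ᵥ w) - fun _ => ∑ j, w j := by
  have hJ : Matrix.of (fun _ _ : Fin n => (1 : ℝ)) *ᵥ w = fun _ => ∑ j, w j := by
    ext i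
    simp [mulVec, dotProduct]
  rw [MAk, ← smul_add, add_comm A, sub_mulVec, smul_mulVec, hJ]

theorem isSymm_MAk {A : Matrix (Fin n) (Fin n) ℝ} (hA : A.IsSymm) (k : ℝ) : (MAk A k).IsSymm :=
  ((hA.smul k).add (isSymm_one.smul k)).sub (IsSymm.ext fun _ _ => rfl)

variable {G : SimpleGraph (Fin n)} [DecidableRel G.Adj]

theorem indicator_dotProduct_MAk_mulVec_indicator (k : ℝ) {T : Finset (Fin n)}
    (hT : G.IsIndepSet T) :
    (T : Set (Fin n)).indicator 1 ⬝ᵥ MAk (G.adjMatrix ℝ) k *ᵥ (T : Set (Fin n)).indicator 1 =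
      T.card * (k - T.card) := by
  set u : Fin n → ℝ := (T : Set (Fin n)).indicator 1 with hu
  have hsum : ∑ j, u j = T.card := by simp [hu, Set.indicator_apply]
  have hrow : ∀ i ∈ T, (MAk (G.adjMatrix ℝ) k *ᵥ u) i = k - T.card := fun i hi => by
    rw [MAk_mulVec, Pi.sub_apply, Pi.smul_apply, one_add_adjMatrix_mulVec_indicator hT hi, hsum,
      smul_eq_mul, mul_one]
  calc u ⬝ᵥ MAk (G.adjMatrix ℝ) k *ᵥ u = ∑ i ∈ T, (MAk (G.adjMatrix ℝ) k *ᵥ u) i := by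
        simp [dotProduct, hu, Set.indicator_apply]
    _ = T.card * (k - T.card) := by
        rw [Finset.sum_congr rfl hrow, Finset.sum_const, nsmul_eq_mul]

theorem le_card_of_dominating_of_gradient_eq_zero {k : ℝ} {x : EuclideanSpace ℝ (Fin n)}
    (hgrad : gradient (quarticForm (MAk (G.adjMatrix ℝ) k)) x = 0) (hx : x ≠ 0)
    {T : Finset (Fin n)} (hTx : ∀ i ∈ T, x i ≠ 0)
    (hT : ∀ j, x j ≠ 0 → ∃ i ∈ T, i = j ∨ G.Adj i j) : k ≤ T.card := by
  have hpos : 0 < vsq x := by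
    refine lt_of_le_of_ne (fun i => sq_nonneg (x i)) fun h0 => hx ?_
    ext i
    simpa [vsq] using (congrFun h0 i).symm
  refine le_card_of_dominating_of_mul_mulVec_eq_sum hpos
    (fun j hj => hT j fun h0 => hj (by simp [vsq, h0])) fun i hi => ?_
  have hstat :=
    mulVec_vsq_apply_of_gradient_eq_zero (isSymm_MAk G.isSymm_adjMatrix k) hgrad (hTx i hi)
  rw [MAk_mulVec] at hstat
  exact sub_eq_zero.1 hstat

end MAk

namespace IsSecondOrderPoint

variable {n : ℕ} {G : SimpleGraph (Fin n)} [DecidableRel G.Adj] {k : ℝ}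
  {x : EuclideanSpace ℝ (Fin n)}

theorem card_le_of_isIndepSet (h : IsSecondOrderPoint (quarticForm (MAk (G.adjMatrix ℝ) k)) x)
    {T : Finset (Fin n)} (hT : G.IsIndepSet T) (hTx : ∀ i ∈ T, x i ≠ 0) (hne : T.Nonempty) :
    T.card ≤ k := by
  have hquad := h.dotProduct_mulVec_nonneg (isSymm_MAk G.isSymm_adjMatrix k)
    fun i hi => Set.indicator_of_notMem (fun hiT => hTx i hiT hi) 1
  rw [indicator_dotProduct_MAk_mulVec_indicator k hT] at hquad
  exact sub_nonneg.1 (nonneg_of_mul_nonneg_right hquad (by exact_mod_cast hne.card_pos))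

theorem card_eq_of_maximal_isIndepSet
    (h : IsSecondOrderPoint (quarticForm (MAk (G.adjMatrix ℝ) k)) x) (hx : x ≠ 0)
    {s : Finset {i : Fin n | x i ≠ 0}}
    (hs : Maximal (G.induce {i : Fin n | x i ≠ 0}).IsIndepSet (s : Set {i : Fin n | x i ≠ 0})) :
    (s.card : ℝ) = k := by
  set T : Finset (Fin n) := s.map (.subtype _)
  have hTx : ∀ i ∈ T, x i ≠ 0 := fun i hi => by
    obtain ⟨a, -, rfl⟩ := Finset.mem_map.1 hi
    exact a.2
  have hindep : G.IsIndepSet T := by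
    rw [Finset.coe_map]
    exact Subtype.val_injective.injOn.pairwise_image.2 hs.prop
  have hdom : ∀ j, x j ≠ 0 → ∃ i ∈ T, i = j ∨ G.Adj i j := fun j hj => by
    obtain ⟨a, ha, haj⟩ := exists_adj_of_maximal_isIndepSet hs ⟨j, hj⟩
    exact ⟨a, Finset.mem_map_of_mem _ ha, haj.imp_left (congrArg Subtype.val)⟩
  have hne : T.Nonempty := by
    by_contra! hempty
    refine hx ?_
    ext j
    by_contra hj
    simpa [hempty] using hdom j hj
  rw [← Finset.card_map (.subtype _)]
  exact le_antisymm (h.card_le_of_isIndepSet hindep hTx hne)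
    (le_card_of_dominating_of_gradient_eq_zero h.gradient_eq_zero hx hTx hdom)

end IsSecondOrderPoint

/-- If `xm` is a nonzero second-order point of the quartic form `p_{A,k}`, then the induced
subgraph of `G` on the vertices where `xm` is nonzero has stability number equal to `k`. -/
theorem stabilityNumber_induce_eq_of_second_order_point {n : ℕ} (G : SimpleGraph (Fin n))
    [DecidableRel G.Adj] (k : ℝ) (xm : EuclideanSpace ℝ (Fin n)) (hxm : xm ≠ 0)
    (hgrad : gradient (quarticForm (MAk (G.adjMatrix ℝ) k)) xm = 0)
    (hhess : ∀ v : EuclideanSpace ℝ (Fin n),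
        0 ≤ ⟪fderiv ℝ (gradient (quarticForm (MAk (G.adjMatrix ℝ) k))) xm v, v⟫) :
    (stabilityNumber (G.induce {i : Fin n | xm i ≠ 0}) : ℝ) = k := by
  obtain ⟨s, hs⟩ := (G.induce {i : Fin n | xm i ≠ 0}).maximumIndepSet_exists
  rw [stabilityNumber_eq_indepNum, ← SimpleGraph.maximumIndepSet_card_eq_indepNum s hs]
  exact IsSecondOrderPoint.card_eq_of_maximal_isIndepSet ⟨hgrad, hhess⟩ hxm hs.isMaximalIndepSet
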